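/- Let G be a group, S and T G-sets, and ρ : ℤ[S] → ℤ[T] a G-equivariant additive homomorphism. Suppose that S has finitely many G-orbits, T has finitely many G-orbits, and the stabilizer in G of each element of T is finite. Then for every integer n ≥ 1 the set D_n has finitely many G-orbits; that is, there is a finite subset R ⊆ ℤ[S] such that every x ∈ D_n equals g • r for some g ∈ G and r ∈ R. -/

import Mathlib

open Finsupp

/-- Action of `g : G` on the permutation module `ℤ[S]`, permuting the basis. -/
def gact {G S : Type*} [Group G] [MulAction G S] (g : G) (x : S →₀ ℤ) : S →₀ ℤ :=
  Finsupp.equivMapDomain (MulAction.toPerm g) x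

/-- The ℓ1-norm on `ℤ[S]`. -/
def l1 {S : Type*} (x : S →₀ ℤ) : ℕ := x.support.sum fun s => (x s).natAbs

/-- `x` is a part of `y`, written `x ⪯_S y`. -/
def IsPart {S : Type*} (x y : S →₀ ℤ) : Prop := ∀ s, x s ^ 2 ≤ x s * y s

/-- `x` and `y` have trivial S-intersection. -/
def SIntTrivial {S : Type*} (x y : S →₀ ℤ) : Prop := ∀ s, 0 ≤ x s * y s

/-- membership in `D₁ = S ∪ (-S) ⊆ ℤ[S]`. -/
def InD1 {S : Type*} (x : S →₀ ℤ) : Prop :=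
  ∃ s, x = Finsupp.single s 1 ∨ x = Finsupp.single s (-1)

/-- `x` and `y` have nontrivial ρ-intersection. -/
def RhoInt {S T : Type*} (ρ : (S →₀ ℤ) →+ (T →₀ ℤ)) (x y : S →₀ ℤ) : Prop :=
  ∃ x₁ y₁, InD1 x₁ ∧ InD1 y₁ ∧ IsPart x₁ x ∧ IsPart y₁ y ∧ ∃ t, ρ x₁ t * ρ y₁ t < 0

/-- membership in `D_n`. -/
def InD {S T : Type*} (ρ : (S →₀ ℤ) →+ (T →₀ ℤ)) (n : ℕ) (x : S →₀ ℤ) : Prop :=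
  ∃ c : ℕ → (S →₀ ℤ), (∀ i < n, InD1 (c i)) ∧ x = ∑ i ∈ Finset.range n, c i ∧
    ∀ k, 1 ≤ k → k < n →
      SIntTrivial (∑ i ∈ Finset.range k, c i) (c k) ∧
      RhoInt ρ (∑ i ∈ Finset.range k, c i) (c k)

/-- `x` is ρ-connected. -/
def RhoConnected {S T : Type*} (ρ : (S →₀ ℤ) →+ (T →₀ ℤ)) (x : S →₀ ℤ) : Prop :=
  ∃ n, 1 ≤ n ∧ InD ρ n x

/-- `ρ` is G-equivariant. -/
def Equivariant (G : Type*) {S T : Type*} [Group G] [MulAction G S] [MulAction G T]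
    (ρ : (S →₀ ℤ) →+ (T →₀ ℤ)) : Prop :=
  ∀ (g : G) (x : S →₀ ℤ), ρ (gact g x) = gact g (ρ x)

/-- `S` has finitely many G-orbits. -/
def FinitelyManyOrbits (G S : Type*) [Group G] [MulAction G S] : Prop :=
  ∃ R : Finset S, ∀ s : S, ∃ (g : G) (r : S), r ∈ R ∧ g • r = s

/-- every element of `T` has finite stabilizer. -/
def FiniteStabilizers (G T : Type*) [Group G] [MulAction G T] : Prop :=
  ∀ t : T, {g : G | g • t = t}.Finite

/-!
`D_{n+1}` is obtained from `D_n` by adding to some `x ∈ D_n` a signed basis element `± s'`, where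
`s'` is constrained by nontrivial `ρ`-intersection: some `t ∈ T` lies in the support of both `ρ s'`
and `ρ s`, for an `s` in the support of `x`. Finiteness of the stabilizers in `T`, together with
finiteness of `G \ S`, implies that only finitely many `s'` have a given `t` in the support of
`ρ s'`. Hence every `x` has finitely many one-step extensions, and as these depend equivariantly
on `x`, finiteness modulo `G` passes from `D_n` to `D_{n+1}`.
-/

section OrbitFinite

open scoped Pointwise

/-- A subset `X` of a `G`-set is orbit-finite if it meets only finitely many orbits. This is phrased
through a finite set of representatives, which need not lie in `X`. -/
def OrbitFinite (G : Type*) {α : Type*} [SMul G α] (X : Set α) : Prop :=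
  ∃ R : Finset α, ∀ x ∈ X, ∃ (g : G) (r : α), r ∈ R ∧ g • r = x

theorem FinitelyManyOrbits.orbitFinite_univ {G S : Type*} [Group G] [MulAction G S]
    (hS : FinitelyManyOrbits G S) : OrbitFinite G (Set.univ : Set S) :=
  hS.imp fun _ hR s _ => hR s

theorem OrbitFinite.mono {G α : Type*} [SMul G α] {X Y : Set α} (hY : OrbitFinite G Y)
    (hXY : X ⊆ Y) : OrbitFinite G X :=
  hY.imp fun _ hR x hx => hR x (hXY hx)

theorem OrbitFinite.biUnion {G α β : Type*} [SMul G α] [SMul G β] {X : Set α} {F : α → Set β}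
    (hX : OrbitFinite G X) (hF : ∀ (g : G) x, F (g • x) ⊆ g • F x) (hfin : ∀ x, (F x).Finite) :
    OrbitFinite G (⋃ x ∈ X, F x) := by
  obtain ⟨R, hR⟩ := hX
  have hRfin : (⋃ r ∈ R, F r).Finite := R.finite_toSet.biUnion fun r _ => hfin r
  refine ⟨hRfin.toFinset, fun y hy => ?_⟩
  obtain ⟨x, hx, hyx⟩ := Set.mem_iUnion₂.1 hy
  obtain ⟨g, r, hr, rfl⟩ := hR x hx
  obtain ⟨y₀, hy₀, rfl⟩ := hF g r hyx
  exact ⟨g, y₀, hRfin.mem_toFinset.2 (Set.mem_biUnion hr hy₀), rfl⟩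

theorem finite_setOf_smul_eq {G α : Type*} [Group G] [MulAction G α] {u : α}
    (hu : {g : G | g • u = u}.Finite) (t : α) : {g : G | g • u = t}.Finite := by
  rcases Set.eq_empty_or_nonempty {g : G | g • u = t} with hempty | ⟨g₀, rfl⟩
  · exact hempty ▸ Set.finite_empty
  · refine (hu.image (g₀ * ·)).subset fun g (hg : g • u = g₀ • u) => ?_
    exact ⟨g₀⁻¹ * g, by simp [mul_smul, hg], mul_inv_cancel_left g₀ g⟩

theorem FiniteStabilizers.finite_setOf_mem {G S T : Type*} [Group G] [MulAction G S]
    [MulAction G T] (hstab : FiniteStabilizers G T) (hS : FinitelyManyOrbits G S)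
    {F : S → Set T} (hF : ∀ (g : G) s, F (g • s) ⊆ g • F s) (hfin : ∀ s, (F s).Finite) (t : T) :
    {s | t ∈ F s}.Finite := by
  obtain ⟨R, hR⟩ := hS
  have htransport : (⋃ r ∈ R, ⋃ u ∈ F r, (· • r) '' {g : G | g • u = t}).Finite :=
    R.finite_toSet.biUnion fun r _ => (hfin r).biUnion fun u _ =>
      (finite_setOf_smul_eq (hstab u) t).image _
  refine htransport.subset fun s (hs : t ∈ F s) => ?_
  obtain ⟨g, r, hr, rfl⟩ := hR s
  obtain ⟨u, hu, hgu⟩ := hF g r hs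
  exact Set.mem_biUnion hr (Set.mem_biUnion hu ⟨g, hgu, rfl⟩)

end OrbitFinite

section PermutationModule

open scoped Pointwise

attribute [local instance] Finsupp.comapSMul Finsupp.comapMulAction Finsupp.comapDistribMulAction

variable {G S T : Type*} [Group G] [MulAction G S] [MulAction G T]
  {ρ : (S →₀ ℤ) →+ (T →₀ ℤ)}

theorem gact_eq_smul (g : G) (x : S →₀ ℤ) : gact g x = g • x :=
  equivMapDomain_eq_mapDomain _ x

theorem Equivariant.map_smul (hρ : Equivariant G ρ) (g : G) (x : S →₀ ℤ) :
    ρ (g • x) = g • ρ x := by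
  simpa only [gact_eq_smul] using hρ g x

theorem coe_support_smul {M : Type*} [AddCommMonoid M] (g : G) (x : S →₀ M) :
    ((g • x).support : Set S) = g • (x.support : Set S) := by
  ext s
  simp [Set.mem_smul_set_iff_inv_smul_mem]

theorem Equivariant.coe_support_map_single_smul (hρ : Equivariant G ρ) (g : G) (s : S) :
    ((ρ (single (g • s) 1)).support : Set T) = g • ((ρ (single s 1)).support : Set T) := by
  rw [← comapSMul_single, hρ.map_smul, coe_support_smul]

theorem Equivariant.smul_mem_support_map_single_smul (hρ : Equivariant G ρ) (g : G) {s : S}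
    {t : T} : g • t ∈ (ρ (single (g • s) 1)).support ↔ t ∈ (ρ (single s 1)).support := by
  rw [← Finset.mem_coe, hρ.coe_support_map_single_smul, Set.smul_mem_smul_set_iff, Finset.mem_coe]

variable (ρ) in
/-- `ρ` is locally finite if each `t : T` occurs in the images of only finitely many basis elements
of `ℤ[S]`, i.e. if the matrix of `ρ` has finite rows (its columns are always finite). -/
def LocallyFiniteMap : Prop :=
  ∀ t, {s | t ∈ (ρ (single s 1)).support}.Finite

theorem Equivariant.locallyFiniteMap (hρ : Equivariant G ρ) (hS : FinitelyManyOrbits G S)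
    (hstab : FiniteStabilizers G T) : LocallyFiniteMap ρ :=
  hstab.finite_setOf_mem hS (F := fun s => (ρ (single s 1)).support)
    (fun g s => (hρ.coe_support_map_single_smul g s).subset) fun _ => Finset.finite_toSet _

variable (ρ) in
/-- The basis elements `s'` for which `ρ s'` shares a support point with `ρ s`, for some `s` in the
support of `x`. The signs in the definition of `ρ`-intersection are forgotten. -/
def rhoNeighbors (x : S →₀ ℤ) : Set S :=
  ⋃ s ∈ x.support, ⋃ t ∈ (ρ (single s 1)).support, {s' | t ∈ (ρ (single s' 1)).support}

theorem mem_rhoNeighbors {x : S →₀ ℤ} {s' : S} :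
    s' ∈ rhoNeighbors ρ x ↔
      ∃ s ∈ x.support, ∃ t ∈ (ρ (single s 1)).support, t ∈ (ρ (single s' 1)).support := by
  simp [rhoNeighbors]

theorem LocallyFiniteMap.finite_rhoNeighbors (hfin : LocallyFiniteMap ρ) (x : S →₀ ℤ) :
    (rhoNeighbors ρ x).Finite :=
  x.support.finite_toSet.biUnion fun _ _ =>
    (Finset.finite_toSet _).biUnion fun t _ => hfin t

theorem Equivariant.rhoNeighbors_smul_subset (hρ : Equivariant G ρ) (g : G) (x : S →₀ ℤ) :
    rhoNeighbors ρ (g • x) ⊆ g • rhoNeighbors ρ x := by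
  intro s' hs'
  obtain ⟨s₁, hs₁, t₁, hst, hs't⟩ := mem_rhoNeighbors.1 hs'
  obtain ⟨s, hs, rfl⟩ := (coe_support_smul g x).subset hs₁
  obtain ⟨t, ht, rfl⟩ := (hρ.coe_support_map_single_smul g s).subset hst
  refine ⟨g⁻¹ • s', mem_rhoNeighbors.2 ⟨s, hs, t, ht, ?_⟩, smul_inv_smul g s'⟩
  rwa [← hρ.smul_mem_support_map_single_smul g, smul_inv_smul]

variable (ρ) in
/-- The elements `x ± s'` with `s'` a neighbor of `x`. They include every sum that the construction
of `D_{n+1}` allows to be formed from `x ∈ D_n`. -/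
def rhoExtensions (x : S →₀ ℤ) : Set (S →₀ ℤ) :=
  Set.image2 (fun s a => x + single s a) (rhoNeighbors ρ x) {1, -1}

theorem LocallyFiniteMap.finite_rhoExtensions (hfin : LocallyFiniteMap ρ) (x : S →₀ ℤ) :
    (rhoExtensions ρ x).Finite :=
  (hfin.finite_rhoNeighbors x).image2 _ (Set.toFinite _)

theorem Equivariant.rhoExtensions_smul_subset (hρ : Equivariant G ρ) (g : G) (x : S →₀ ℤ) :
    rhoExtensions ρ (g • x) ⊆ g • rhoExtensions ρ x := by
  rintro _ ⟨s, hs, a, ha, rfl⟩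
  obtain ⟨s₀, hs₀, rfl⟩ := hρ.rhoNeighbors_smul_subset g x hs
  exact ⟨x + single s₀ a, ⟨s₀, hs₀, a, ha, rfl⟩, by simp only [smul_add, comapSMul_single]⟩

theorem inD1_iff_exists_single {x : S →₀ ℤ} :
    InD1 x ↔ ∃ s, ∃ a ∈ ({1, -1} : Set ℤ), x = single s a := by
  simp [InD1]

theorem IsPart.support_subset {x y : S →₀ ℤ} (h : IsPart x y) : x.support ⊆ y.support := by
  intro s hs
  rw [mem_support_iff] at hs ⊢
  exact right_ne_zero_of_mul ((sq_pos_of_ne_zero hs).trans_le (h s)).ne'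

theorem InD1.exists_support_map_eq {x : S →₀ ℤ} (hx : InD1 x) (ρ : (S →₀ ℤ) →+ (T →₀ ℤ)) :
    ∃ s ∈ x.support, (ρ x).support = (ρ (single s 1)).support := by
  obtain ⟨s, rfl | rfl⟩ := hx
  · exact ⟨s, by simp, rfl⟩
  · exact ⟨s, by simp, by rw [single_neg, map_neg, support_neg]⟩

theorem RhoInt.exists_mem_rhoNeighbors {x y : S →₀ ℤ} (h : RhoInt ρ x y) :
    ∃ s ∈ y.support, s ∈ rhoNeighbors ρ x := by
  obtain ⟨x₁, y₁, hx₁, hy₁, hx₁x, hy₁y, t, ht⟩ := h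
  obtain ⟨s, hs, hρs⟩ := hx₁.exists_support_map_eq ρ
  obtain ⟨s', hs', hρs'⟩ := hy₁.exists_support_map_eq ρ
  refine ⟨s', hy₁y.support_subset hs', mem_rhoNeighbors.2 ⟨s, hx₁x.support_subset hs, t, ?_, ?_⟩⟩
  · exact hρs ▸ mem_support_iff.2 (left_ne_zero_of_mul ht.ne)
  · exact hρs' ▸ mem_support_iff.2 (right_ne_zero_of_mul ht.ne)

theorem RhoInt.add_mem_rhoExtensions {x y : S →₀ ℤ} (h : RhoInt ρ x y) (hy : InD1 y) :
    x + y ∈ rhoExtensions ρ x := by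
  obtain ⟨s, a, ha, rfl⟩ := inD1_iff_exists_single.1 hy
  obtain ⟨s', hs', hmem⟩ := h.exists_mem_rhoNeighbors
  obtain rfl := Finset.mem_singleton.1 (support_single_subset hs')
  exact ⟨s', hmem, a, ha, rfl⟩

theorem InD.inD1 {x : S →₀ ℤ} (hx : InD ρ 1 x) : InD1 x := by
  obtain ⟨c, hc, rfl, -⟩ := hx
  simpa only [Finset.sum_range_one] using hc 0 one_pos

theorem InD.exists_mem_rhoExtensions {n : ℕ} (hn : 1 ≤ n) {x : S →₀ ℤ}
    (hx : InD ρ (n + 1) x) : ∃ y, InD ρ n y ∧ x ∈ rhoExtensions ρ y := by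
  obtain ⟨c, hc, rfl, hstep⟩ := hx
  refine ⟨∑ i ∈ Finset.range n, c i,
    ⟨c, fun i hi => hc i (by lia), rfl, fun k hk hkn => hstep k hk (by lia)⟩, ?_⟩
  rw [Finset.sum_range_succ]
  exact (hstep n hn n.lt_succ_self).2.add_mem_rhoExtensions (hc n n.lt_succ_self)

theorem FinitelyManyOrbits.orbitFinite_setOf_inD1 (hS : FinitelyManyOrbits G S) :
    OrbitFinite G {x : S →₀ ℤ | InD1 x} := by
  refine (hS.orbitFinite_univ.biUnion (F := fun s => single s '' ({1, -1} : Set ℤ))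
    ?_ fun s => (Set.toFinite _).image _).mono ?_
  · rintro g s _ ⟨a, ha, rfl⟩
    exact ⟨single s a, ⟨a, ha, rfl⟩, comapSMul_single g s a⟩
  · intro x hx
    obtain ⟨s, a, ha, rfl⟩ := inD1_iff_exists_single.1 hx
    exact Set.mem_biUnion (Set.mem_univ s) ⟨a, ha, rfl⟩

theorem LocallyFiniteMap.orbitFinite_setOf_inD (hfin : LocallyFiniteMap ρ) (hρ : Equivariant G ρ)
    (hS : FinitelyManyOrbits G S) {n : ℕ} (hn : 1 ≤ n) :
    OrbitFinite G {x | InD ρ n x} := by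
  induction n, hn using Nat.le_induction with
  | base => exact hS.orbitFinite_setOf_inD1.mono fun x hx => InD.inD1 hx
  | succ n hn ih =>
    refine (ih.biUnion hρ.rhoExtensions_smul_subset hfin.finite_rhoExtensions).mono fun x hx => ?_
    obtain ⟨y, hy, hxy⟩ := InD.exists_mem_rhoExtensions hn hx
    exact Set.mem_biUnion hy hxy

theorem stmt_6_general (ρ : (S →₀ ℤ) →+ (T →₀ ℤ)) (hρ : Equivariant G ρ)
    (hS : FinitelyManyOrbits G S) (hstab : FiniteStabilizers G T) :
    ∀ n : ℕ, 1 ≤ n → ∃ R : Finset (S →₀ ℤ),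
      ∀ x : S →₀ ℤ, InD ρ n x → ∃ (g : G) (r : S →₀ ℤ), r ∈ R ∧ x = gact g r := by
  intro n hn
  obtain ⟨R, hR⟩ := (hρ.locallyFiniteMap hS hstab).orbitFinite_setOf_inD hρ hS hn
  refine ⟨R, fun x hx => ?_⟩
  obtain ⟨g, r, hr, rfl⟩ := hR x hx
  exact ⟨g, r, hr, (gact_eq_smul g r).symm⟩

end PermutationModule

/-- Proposition: `D_n` has finitely many G-orbits. -/
theorem stmt_6 {G S T : Type*} [Group G] [MulAction G S] [MulAction G T]
    (ρ : (S →₀ ℤ) →+ (T →₀ ℤ)) (hρ : Equivariant G ρ)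
    (hS : FinitelyManyOrbits G S) (hT : FinitelyManyOrbits G T)
    (hstab : FiniteStabilizers G T) :
    ∀ n : ℕ, 1 ≤ n → ∃ R : Finset (S →₀ ℤ),
      ∀ x : S →₀ ℤ, InD ρ n x → ∃ (g : G) (r : S →₀ ℤ), r ∈ R ∧ x = gact g r :=
  stmt_6_general ρ hρ hS hstab
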